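/- Let K be a group, H a subgroup of K, and N a type with a multiplicative action of H. Let H act on K × N by h • (k, n) = (k * h⁻¹, h • n), let Q denote the quotient of K × N by the orbit equivalence relation of this H-action, and write ⟦(k, n)⟧ for the class of (k, n). Let G be a normal subgroup of K, acting on Q by g • ⟦(k, n)⟧ = ⟦(g * k, n)⟧ (this action is well defined because left multiplication by G commutes with the H-action). Then for every k ∈ K and n ∈ N, the stabilizer of ⟦(k, n)⟧ in G, i.e. { g ∈ G : ⟦(g * k, n)⟧ = ⟦(k, n)⟧ }, equals the conjugate by k of the stabilizer of n in G ∩ H, that is, it equals { k * g * k⁻¹ : g ∈ G ∩ H, g • n = n } as a subset of K. -/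

import Mathlib

/-- The `H`-action on `K × N` given by `h • (k, n) = (k * h⁻¹, h • n)`, as a setoid
whose classes are the orbits. The quotient is the twisted product `K ×_H N`. -/
def twistedSetoid {K : Type*} [Group K] (H : Subgroup K) (N : Type*) [MulAction H N] :
    Setoid (K × N) where
  r p q := ∃ h : H, (p.1 * (h : K)⁻¹, h • p.2) = q
  iseqv := by
    constructor
    · intro p
      exact ⟨1, by simp⟩
    · rintro p q ⟨h, rfl⟩
      exact ⟨h⁻¹, by simp [mul_assoc, smul_smul]⟩
    · rintro p q r ⟨h, rfl⟩ ⟨h', rfl⟩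
      exact ⟨h' * h, by simp [mul_assoc, smul_smul]⟩

/-- The class `⟦(k, n)⟧` of `(k, n)` in the twisted product `K ×_H N`. -/
def twistedMk {K : Type*} [Group K] (H : Subgroup K) {N : Type*} [MulAction H N]
    (k : K) (n : N) : Quotient (twistedSetoid H N) :=
  Quotient.mk (twistedSetoid H N) (k, n)

theorem conj_mem_iff_of_normal {K : Type*} [Group K] {G : Subgroup K} (hG : G.Normal) {k g : K} :
    k * g * k⁻¹ ∈ G ↔ g ∈ G := by
  rw [hG.mem_comm_iff, inv_mul_cancel_left]

section

variable {K : Type*} [Group K] {H : Subgroup K} {N : Type*} [MulAction H N]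

theorem twistedMk_eq_twistedMk_iff {k k' : K} {n n' : N} :
    twistedMk H k n = twistedMk H k' n' ↔ ∃ h : H, h • n = n' ∧ k = k' * (h : K) :=
  Quotient.eq.trans <| exists_congr fun _ => by
    rw [Prod.mk.injEq, mul_inv_eq_iff_eq_mul, and_comm]

theorem twistedMk_mul_left_eq_self_iff {g k : K} {n : N} :
    twistedMk H (g * k) n = twistedMk H k n ↔
      ∃ h : H, h • n = n ∧ g = k * (h : K) * k⁻¹ := by
  simp only [twistedMk_eq_twistedMk_iff, eq_mul_inv_iff_mul_eq]

end

/-- For the action of a normal subgroup `G ≤ K` on the twisted product `K ×_H N` given by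
`g • ⟦(k, n)⟧ = ⟦(g * k, n)⟧`, the stabilizer of `⟦(k, n)⟧` in `G` is the conjugate by `k`
of the stabilizer of `n` in `G ∩ H`. -/
theorem stabilizer_twistedProduct_eq_conj {K : Type*} [Group K] (H : Subgroup K)
    {N : Type*} [MulAction H N] (G : Subgroup K) (hG : G.Normal) (k : K) (n : N) :
    {g : K | g ∈ G ∧ twistedMk H (g * k) n = twistedMk H k n}
      = {x : K | ∃ g : H, (g : K) ∈ G ∧ g • n = n ∧ x = k * (g : K) * k⁻¹} := by
  ext x
  rw [Set.mem_ofPred_eq, Set.mem_ofPred_eq, twistedMk_mul_left_eq_self_iff]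
  constructor
  · rintro ⟨h_mem, h, h_fix, rfl⟩
    exact ⟨h, (conj_mem_iff_of_normal hG).mp h_mem, h_fix, rfl⟩
  · rintro ⟨h, h_mem, h_fix, rfl⟩
    exact ⟨(conj_mem_iff_of_normal hG).mpr h_mem, h, h_fix, rfl⟩
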